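/- arXiv:1503.09014 — 2 statements merged into one kernel-verified Lean document; each statement's English description precedes it below -/
import Mathlib

section
/- Let X ⊆ ℝⁿ be a closed convex set containing no line, let E be the set of its extreme points and D the set of its extreme (recession) directions. Then X = conv(E) + coni(D), i.e., every x ∈ X is the sum of a convex combination of extreme points and a nonnegative combination of extreme directions, and conversely. -/
open Pointwise

/-- A nonzero vector `d` is a recession direction of `S` if `x + θ • d ∈ S`
for all `x ∈ S` and `θ ≥ 0`. -/
def IsRecessionDirection {E : Type*} [AddCommGroup E] [Module ℝ E] (S : Set E) (d : E) : Prop :=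
  d ≠ 0 ∧ ∀ x ∈ S, ∀ θ : ℝ, 0 ≤ θ → x + θ • d ∈ S

/-- A recession direction `d` of `S` is extreme if whenever `d = l₁ • d₁ + l₂ • d₂`
with `l₁, l₂ > 0` and `d₁, d₂` recession directions, `d₁` is a positive multiple of `d₂`. -/
def IsExtremeDirection {E : Type*} [AddCommGroup E] [Module ℝ E] (S : Set E) (d : E) : Prop :=
  IsRecessionDirection S d ∧
    ∀ d₁ d₂ : E, IsRecessionDirection S d₁ → IsRecessionDirection S d₂ →
      ∀ l₁ l₂ : ℝ, 0 < l₁ → 0 < l₂ → d = l₁ • d₁ + l₂ • d₂ →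
        ∃ α : ℝ, 0 < α ∧ d₁ = α • d₂

/-- The conical hull of `D`: all finite nonnegative combinations of elements of `D`
(including `0`). -/
def ConicalHull {E : Type*} [AddCommGroup E] [Module ℝ E] (D : Set E) : Set E :=
  {z : E | ∃ (k : ℕ) (c : Fin k → ℝ) (v : Fin k → E),
    (∀ i, 0 ≤ c i) ∧ (∀ i, v i ∈ D) ∧ z = ∑ i, c i • v i}

section Representation

variable {E : Type*} [AddCommGroup E] [Module ℝ E]

theorem zero_mem_conicalHull (D : Set E) : (0 : E) ∈ ConicalHull D :=
  ⟨0, Fin.elim0, Fin.elim0, fun i => i.elim0, fun i => i.elim0, by simp⟩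

theorem smul_mem_conicalHull {D : Set E} {d : E} (hd : d ∈ D) {c : ℝ} (hc : 0 ≤ c) :
    c • d ∈ ConicalHull D :=
  ⟨1, fun _ => c, fun _ => d, fun _ => hc, fun _ => hd, by simp⟩

theorem smul_add_smul_mem_conicalHull {D : Set E} {y z : E} (hy : y ∈ ConicalHull D)
    (hz : z ∈ ConicalHull D) {a b : ℝ} (ha : 0 ≤ a) (hb : 0 ≤ b) :
    a • y + b • z ∈ ConicalHull D := by
  obtain ⟨k, c, v, hc, hv, rfl⟩ := hy
  obtain ⟨l, c', v', hc', hv', rfl⟩ := hz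
  refine ⟨k + l, Fin.append (a • c) (b • c'), Fin.append v v', fun i => ?_, fun i => ?_, ?_⟩
  · refine Fin.addCases (fun i => ?_) (fun i => ?_) i
    · simpa using mul_nonneg ha (hc i)
    · simpa using mul_nonneg hb (hc' i)
  · refine Fin.addCases (fun i => ?_) (fun i => ?_) i
    · simpa using hv i
    · simpa using hv' i
  · simp [Fin.sum_univ_add, Finset.smul_sum, mul_smul]

theorem convex_conicalHull (D : Set E) : Convex ℝ (ConicalHull D) :=
  fun _ hy _ hz _ _ ha hb _ => smul_add_smul_mem_conicalHull hy hz ha hb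

theorem add_mem_of_mem_conicalHull {S : Set E} {x z : E} (hx : x ∈ S)
    (hz : z ∈ ConicalHull {d | IsExtremeDirection S d}) : x + z ∈ S := by
  obtain ⟨k, c, v, hc, hv, rfl⟩ := hz
  suffices ∀ s : Finset (Fin k), x + ∑ i ∈ s, c i • v i ∈ S from this Finset.univ
  intro s
  induction s using Finset.induction_on with
  | empty => simpa
  | insert i s hi ih =>
    rw [Finset.sum_insert hi, add_comm (c i • v i), ← add_assoc]
    exact (hv i).1.2 _ ih _ (hc i)

theorem Convex.add_smul_mem_of_mem_Icc {S : Set E} (hS : Convex ℝ S) {x d : E} {a b t : ℝ}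
    (ha : x + a • d ∈ S) (hb : x + b • d ∈ S) (ht : t ∈ Set.Icc a b) : x + t • d ∈ S := by
  have h : Convex ℝ ((fun t : ℝ => x + t • d) ⁻¹' S) := by
    intro s hs r hr p q hp hq hpq
    have := hS hs hr hp hq hpq
    simp only [Set.mem_preimage] at this ⊢
    convert this using 1
    simp only [smul_eq_mul, add_smul, smul_add, mul_smul]
    rw [show p • x + p • s • d + (q • x + q • r • d) = (p + q) • x + (p • s • d + q • r • d) by
      rw [add_smul]; abel, hpq, one_smul]
  exact h.ordConnected.out ha hb ht

/-- The directions in which one can move both ways from `x` without leaving `S`;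
it is the direction of the affine span of the smallest face containing `x`. -/
def Convex.facialSubspace {S : Set E} (hS : Convex ℝ S) {x : E} (hx : x ∈ S) :
    Submodule ℝ E where
  carrier := {d | ∃ ε : ℝ, 0 < ε ∧ x + ε • d ∈ S ∧ x + (-ε) • d ∈ S}
  zero_mem' := ⟨1, one_pos, by simpa, by simpa⟩
  add_mem' := by
    rintro d e ⟨ε, hε, h₁, h₂⟩ ⟨δ, hδ, h₃, h₄⟩
    have hm : 0 < min ε δ := lt_min hε hδ
    have hl := min_le_left ε δ
    have hr := min_le_right ε δ
    have key : ∀ s : ℝ, |s| ≤ min ε δ → x + (s / 2) • (d + e) ∈ S := by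
      intro s hs
      obtain ⟨hs₁, hs₂⟩ := abs_le.1 hs
      have h := hS (hS.add_smul_mem_of_mem_Icc h₂ h₁ (t := s) ⟨by linarith, by linarith⟩)
        (hS.add_smul_mem_of_mem_Icc h₄ h₃ (t := s) ⟨by linarith, by linarith⟩)
        (a := 1 / 2) (b := 1 / 2) (by norm_num) (by norm_num) (by norm_num)
      convert h using 1
      module
    refine ⟨min ε δ / 2, by positivity, key _ (abs_of_pos hm).le, ?_⟩
    rw [← neg_div]
    exact key _ (by rw [abs_neg, abs_of_pos hm])
  smul_mem' := by
    rintro c d ⟨ε, hε, h₁, h₂⟩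
    have key : ∀ s : ℝ, |s| ≤ ε / (|c| + 1) → x + s • c • d ∈ S := by
      intro s hs
      rw [smul_smul]
      refine hS.add_smul_mem_of_mem_Icc h₂ h₁ (abs_le.1 ?_)
      rw [abs_mul]
      rw [le_div_iff₀ (by positivity)] at hs
      nlinarith [abs_nonneg s]
    have hp : 0 < ε / (|c| + 1) := by positivity
    exact ⟨_, hp, key _ (abs_of_pos hp).le, key _ (by rw [abs_neg, abs_of_pos hp])⟩

theorem Convex.mem_facialSubspace {S : Set E} (hS : Convex ℝ S) {x : E} (hx : x ∈ S) {d : E} :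
    d ∈ hS.facialSubspace hx ↔ ∃ ε : ℝ, 0 < ε ∧ x + ε • d ∈ S ∧ x + (-ε) • d ∈ S :=
  Iff.rfl

theorem Convex.mem_extremePoints_of_facialSubspace_eq_bot {S : Set E} (hS : Convex ℝ S) {x : E}
    (hx : x ∈ S) (h : hS.facialSubspace hx = ⊥) : x ∈ Set.extremePoints ℝ S := by
  refine mem_extremePoints.2 ⟨hx, ?_⟩
  rintro y hy z hz ⟨a, b, ha, hb, hab, rfl⟩
  obtain rfl : b = 1 - a := by linarith
  have hyz : y - z ∈ hS.facialSubspace hx := by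
    have h₀ : 0 ≤ min a (1 - a) := (lt_min ha hb).le
    refine ⟨min a (1 - a), lt_min ha hb, ?_, ?_⟩
    · have := hS hy hz (a := a + min a (1 - a)) (b := 1 - a - min a (1 - a)) (by linarith)
        (by linarith [min_le_right a (1 - a)]) (by ring)
      convert this using 1
      module
    · have := hS hy hz (a := a - min a (1 - a)) (b := 1 - a + min a (1 - a))
        (by linarith [min_le_left a (1 - a)]) (by linarith) (by ring)
      convert this using 1
      module
  rw [h, Submodule.mem_bot, sub_eq_zero] at hyz
  subst hyz
  constructor <;> module

theorem Convex.facialSubspace_lt {S : Set E} (hS : Convex ℝ S) {x d : E} (hx : x ∈ S)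
    (hd : d ∈ hS.facialSubspace hx) {t : ℝ} (ht : 0 < t) (hy : x + t • d ∈ S)
    (hmax : ∀ s, t < s → x + s • d ∉ S) : hS.facialSubspace hy < hS.facialSubspace hx := by
  refine lt_of_le_of_ne ?_ ?_
  · obtain ⟨ε, hε, -, h₂⟩ := hd
    have hsum : 0 < ε + t := by positivity
    rintro e ⟨δ, hδ, h₃, h₄⟩
    have key : ∀ s : ℝ, x + t • d + s • e ∈ S → x + (ε / (ε + t) * s) • e ∈ S := by
      intro s hs
      have := hS hs h₂ (a := ε / (ε + t)) (b := t / (ε + t)) (by positivity) (by positivity)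
        (by field_simp)
      convert this using 1
      match_scalars <;> field_simp
      ring
    refine ⟨ε / (ε + t) * δ, by positivity, key _ h₃, ?_⟩
    rw [← mul_neg]
    exact key _ h₄
  · intro heq
    rw [← heq] at hd
    obtain ⟨ε, hε, h₁, -⟩ := hd
    refine hmax (t + ε) (by linarith) ?_
    rwa [add_smul, ← add_assoc]

/-- If the smallest face containing `x` is a ray, its direction is an extreme direction. -/
theorem Convex.isExtremeDirection_of_facialSubspace_le_span {S : Set E} (hS : Convex ℝ S)
    {x d : E} (hx : x ∈ S) (hV : ∀ e ∈ hS.facialSubspace hx, ∃ c : ℝ, c • d = e)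
    (hd : IsRecessionDirection S d) (hneg : ¬ IsRecessionDirection S (-d))
    (hdV : d ∈ hS.facialSubspace hx) : IsExtremeDirection S d := by
  refine ⟨hd, fun d₁ d₂ h₁ h₂ l₁ l₂ hl₁ hl₂ hsum => ?_⟩
  obtain ⟨ε, hε, -, hy⟩ := hdV
  have key : ∀ e f : E, IsRecessionDirection S e → IsRecessionDirection S f → ∀ a b : ℝ,
      0 < a → 0 < b → d = a • e + b • f → ∃ c : ℝ, 0 < c ∧ e = c • d := by
    intro e f he hf a b ha hb hd_eq
    obtain ⟨c, rfl⟩ := hV e ⟨ε * a, by positivity, he.2 x hx _ (by positivity), by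
      have := hf.2 _ hy (ε * b) (by positivity)
      convert this using 1
      rw [hd_eq]
      module⟩
    refine ⟨c, ?_, rfl⟩
    by_contra! hc
    have hc0 : c ≠ 0 := by
      rintro rfl
      exact he.1 (zero_smul ℝ d)
    refine hneg ⟨neg_ne_zero.2 hd.1, fun z hz θ hθ => ?_⟩
    have := he.2 z hz (θ / (-c)) (div_nonneg hθ (by linarith))
    convert this using 2
    rw [smul_smul, smul_neg, ← neg_smul]
    congr 1
    field_simp
  obtain ⟨c₁, hc₁, h₁'⟩ := key d₁ d₂ h₁ h₂ l₁ l₂ hl₁ hl₂ hsum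
  obtain ⟨c₂, hc₂, h₂'⟩ := key d₂ d₁ h₂ h₁ l₂ l₁ hl₂ hl₁ (by rw [hsum, add_comm])
  refine ⟨c₁ / c₂, by positivity, ?_⟩
  rw [h₁', h₂', smul_smul, div_mul_cancel₀ _ hc₂.ne']

variable [TopologicalSpace E] [IsTopologicalAddGroup E] [ContinuousSMul ℝ E]

theorem IsClosed.add_smul_mem_of_ray {S : Set E} (hSc : IsClosed S) (hS : Convex ℝ S) {x d : E}
    (h : ∀ t : ℝ, 0 ≤ t → x + t • d ∈ S) {z : E} (hz : z ∈ S) {θ : ℝ} (hθ : 0 ≤ θ) :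
    z + θ • d ∈ S := by
  have hlim : Filter.Tendsto (fun s : ℝ => (1 - s) • z + s • x + θ • d)
      (nhdsWithin 0 (Set.Ioi 0)) (nhds (z + θ • d)) := by
    have : Continuous (fun s : ℝ => (1 - s) • z + s • x + θ • d) := by fun_prop
    simpa using (this.tendsto 0).mono_left nhdsWithin_le_nhds
  refine hSc.mem_of_tendsto hlim ?_
  filter_upwards [Ioo_mem_nhdsGT (zero_lt_one' ℝ)] with s hs
  have := hS hz (h (θ / s) (div_nonneg hθ hs.1.le)) (a := 1 - s) (b := s)
    (by linarith [hs.2]) hs.1.le (by ring)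
  convert this using 1
  have := hs.1.ne'
  match_scalars <;> field_simp

theorem IsClosed.exists_last_add_smul_mem {S : Set E} (hSc : IsClosed S) (hS : Convex ℝ S)
    {x d : E} (hx : x ∈ S) (hd : d ∈ hS.facialSubspace hx) (h0 : d ≠ 0)
    (hrec : ¬ IsRecessionDirection S d) :
    ∃ t : ℝ, 0 < t ∧ x + t • d ∈ S ∧ ∀ s, t < s → x + s • d ∉ S := by
  obtain ⟨r, hr, hrS⟩ : ∃ r : ℝ, 0 ≤ r ∧ x + r • d ∉ S := by
    by_contra! hcon
    exact hrec ⟨h0, fun z hz θ hθ => hSc.add_smul_mem_of_ray hS hcon hz hθ⟩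
  obtain ⟨ε, hε, h₁, -⟩ := hd
  have hx0 : x + (0 : ℝ) • d ∈ S := by simpa
  have hbdd : BddAbove {t : ℝ | x + t • d ∈ S} := by
    refine ⟨r, fun t ht => ?_⟩
    by_contra! hlt
    exact hrS (hS.add_smul_mem_of_mem_Icc hx0 ht ⟨hr, hlt.le⟩)
  have hcl : IsClosed {t : ℝ | x + t • d ∈ S} :=
    hSc.preimage (f := fun t : ℝ => x + t • d) (by fun_prop)
  refine ⟨_, hε.trans_le (le_csSup hbdd h₁), hcl.csSup_mem ⟨ε, h₁⟩ hbdd, fun s hs hsS => ?_⟩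
  exact hs.not_ge (le_csSup hbdd hsS)

theorem isClosed_setOf_forall_add_smul_mem {S : Set E} (hSc : IsClosed S) :
    IsClosed {d : E | ∀ x ∈ S, ∀ θ : ℝ, 0 ≤ θ → x + θ • d ∈ S} := by
  simp only [Set.ofPred_forall]
  refine isClosed_iInter fun x => isClosed_iInter fun _ => isClosed_iInter fun θ =>
    isClosed_iInter fun _ => hSc.preimage (f := fun d : E => x + θ • d) (by fun_prop)

/-- If every line of a subspace `V` is spanned by a recession direction of a closed set whose
recession cone is pointed, then `V` has dimension at most one: otherwise `V \ {0}` is connected,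
yet covered by two disjoint closed sets. -/
theorem finrank_le_one_of_forall_isRecessionDirection {S : Set E} (hSc : IsClosed S)
    (hpt : ∀ d, IsRecessionDirection S d → ¬ IsRecessionDirection S (-d)) (V : Submodule ℝ E)
    (hV : ∀ d ∈ V, d ≠ 0 → IsRecessionDirection S d ∨ IsRecessionDirection S (-d)) :
    Module.finrank ℝ V ≤ 1 := by
  by_contra! hlt
  have : Module.Finite ℝ V := Module.finite_of_finrank_pos (by omega)
  have hrank : 1 < Module.rank ℝ V := by
    rw [← Module.finrank_eq_rank]
    exact_mod_cast hlt
  have : Nontrivial V := Module.nontrivial_of_finrank_pos (R := ℝ) (by omega)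
  have hconn := (isConnected_compl_singleton_of_one_lt_rank hrank (0 : V)).isPreconnected
  rw [isPreconnected_closed_iff] at hconn
  have hcl := isClosed_setOf_forall_add_smul_mem hSc
  obtain ⟨v, hv⟩ := exists_ne (0 : V)
  have hrec : ∀ w : V, w ≠ 0 →
      IsRecessionDirection S (w : E) ∨ IsRecessionDirection S (-(w : E)) := fun w hw =>
    hV w w.2 (by simpa using hw)
  have hex : ∃ w : V, w ≠ 0 ∧ IsRecessionDirection S (w : E) := by
    rcases hrec v hv with h | h
    · exact ⟨v, hv, h⟩
    · exact ⟨-v, neg_ne_zero.2 hv, by simpa using h⟩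
  obtain ⟨w, hw, hwS⟩ := hex
  obtain ⟨u, hu, hu₁, hu₂⟩ := hconn _ _
    (hcl.preimage (f := fun w : V => (w : E)) (by fun_prop))
    (hcl.preimage (f := fun w : V => -(w : E)) (by fun_prop))
    (fun u hu => (hrec u hu).imp And.right And.right)
    ⟨w, hw, hwS.2⟩ ⟨-w, neg_ne_zero.2 hw, by simpa using hwS.2⟩
  have hu0 : (u : E) ≠ 0 := by simpa using hu
  exact hpt u ⟨hu0, hu₁⟩ ⟨neg_ne_zero.2 hu0, hu₂⟩

theorem IsClosed.subset_convexHull_extremePoints_add_conicalHull [FiniteDimensional ℝ E]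
    {S : Set E} (hSc : IsClosed S) (hS : Convex ℝ S)
    (hpt : ∀ d, IsRecessionDirection S d → ¬ IsRecessionDirection S (-d)) :
    S ⊆ convexHull ℝ (Set.extremePoints ℝ S) + ConicalHull {d | IsExtremeDirection S d} := by
  suffices ∀ (k : ℕ) (x : E) (hx : x ∈ S), Module.finrank ℝ (hS.facialSubspace hx) = k →
      x ∈ convexHull ℝ (Set.extremePoints ℝ S) + ConicalHull {d | IsExtremeDirection S d} from
    fun x hx => this _ x hx rfl
  intro k
  induction k using Nat.strong_induction_on with
  | _ k ih =>
  rintro x hx rfl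
  have hext : ∀ d ∈ hS.facialSubspace hx, d ≠ 0 → ¬ IsRecessionDirection S d →
      ∃ t : ℝ, 0 < t ∧ x + t • d ∈
        convexHull ℝ (Set.extremePoints ℝ S) + ConicalHull {d | IsExtremeDirection S d} := by
    intro d hd h0 hrec
    obtain ⟨t, ht, hy, hmax⟩ := hSc.exists_last_add_smul_mem hS hx hd h0 hrec
    exact ⟨t, ht, ih _ (Submodule.finrank_lt_finrank_of_lt
      (hS.facialSubspace_lt hx hd ht hy hmax)) _ hy rfl⟩
  by_cases hdir : ∃ d ∈ hS.facialSubspace hx, d ≠ 0 ∧ ¬ IsRecessionDirection S d ∧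
      ¬ IsRecessionDirection S (-d)
  · obtain ⟨d, hd, h0, h₁, h₂⟩ := hdir
    obtain ⟨t, ht, hy⟩ := hext d hd h0 h₁
    obtain ⟨s, hs, hz⟩ := hext (-d) (neg_mem hd) (neg_ne_zero.2 h0) h₂
    rw [smul_neg, ← neg_smul] at hz
    have := ((convex_convexHull ℝ (Set.extremePoints ℝ S)).add
      (convex_conicalHull {d | IsExtremeDirection S d})).add_smul_mem_of_mem_Icc hz hy
      (t := 0) ⟨by linarith, ht.le⟩
    simpa using this
  push Not at hdir
  have hle : Module.finrank ℝ (hS.facialSubspace hx) ≤ 1 :=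
    finrank_le_one_of_forall_isRecessionDirection hSc hpt _ fun d hd h0 =>
      or_iff_not_imp_left.2 (hdir d hd h0)
  by_cases hbot : hS.facialSubspace hx = ⊥
  · exact ⟨x, subset_convexHull ℝ _ (hS.mem_extremePoints_of_facialSubspace_eq_bot hx hbot),
      0, zero_mem_conicalHull _, add_zero x⟩
  obtain ⟨d, hd, h0, hrec⟩ : ∃ d ∈ hS.facialSubspace hx, d ≠ 0 ∧ IsRecessionDirection S d := by
    obtain ⟨d, hd, h0⟩ := Submodule.exists_mem_ne_zero_of_ne_bot hbot
    by_cases hrec : IsRecessionDirection S d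
    · exact ⟨d, hd, h0, hrec⟩
    · exact ⟨-d, neg_mem hd, neg_ne_zero.2 h0, hdir d hd h0 hrec⟩
  have hspan : ∀ e ∈ hS.facialSubspace hx, ∃ c : ℝ, c • d = e := by
    have hone : Module.finrank ℝ (hS.facialSubspace hx) = 1 :=
      le_antisymm hle (Submodule.one_le_finrank_iff.2 hbot)
    intro e he
    obtain ⟨c, hc⟩ := (finrank_eq_one_iff_of_nonzero' (⟨d, hd⟩ : hS.facialSubspace hx)
      (by simpa using h0)).1 hone ⟨e, he⟩
    exact ⟨c, congrArg Subtype.val hc⟩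
  have hextr := hS.isExtremeDirection_of_facialSubspace_le_span hx hspan hrec (hpt d hrec) hd
  obtain ⟨t, ht, p, hp, q, hq, hpq⟩ := hext (-d) (neg_mem hd) (neg_ne_zero.2 h0) (hpt d hrec)
  refine ⟨p, hp, q + t • d, ?_, ?_⟩
  · simpa using smul_add_smul_mem_conicalHull hq
      (smul_mem_conicalHull (D := {d | IsExtremeDirection S d}) hextr ht.le)
      zero_le_one zero_le_one
  · simp only at hpq ⊢
    rw [← add_assoc, hpq]
    module

end Representation

/-- Representation theorem: a nonempty closed convex set `X ⊆ ℝⁿ` containing no line is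
the Minkowski sum of the convex hull of its extreme points and the conical hull of its
extreme recession directions. -/
theorem representation_theorem (n : ℕ) (X : Set (Fin n → ℝ))
    (hne : X.Nonempty) (hXc : IsClosed X) (hX : Convex ℝ X)
    (hline : ¬ ∃ x ∈ X, ∃ d : Fin n → ℝ, d ≠ 0 ∧ ∀ t : ℝ, x + t • d ∈ X) :
    X = convexHull ℝ (Set.extremePoints ℝ X) +
        ConicalHull {d : Fin n → ℝ | IsExtremeDirection X d} := by
  have hpt : ∀ d, IsRecessionDirection X d → ¬ IsRecessionDirection X (-d) := by
    intro d hd hd'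
    obtain ⟨x, hx⟩ := hne
    refine hline ⟨x, hx, d, hd.1, fun t => ?_⟩
    rcases le_total 0 t with ht | ht
    · exact hd.2 x hx t ht
    · simpa using hd'.2 x hx (-t) (by linarith)
  refine (hXc.subset_convexHull_extremePoints_add_conicalHull hX hpt).antisymm ?_
  rintro _ ⟨p, hp, q, hq, rfl⟩
  exact add_mem_of_mem_conicalHull (convexHull_min extremePoints_subset hX hp) hq
end

section
/- Goldman–Tucker theorem: if the primal max{cᵀx : Ax ≤ b, x ≥ 0} and dual min{bᵀy : Aᵀy ≥ c, y ≥ 0} both have optimal solutions, then there exist optimal solutions x*, y* with slacks u* = b − Ax* and v* = Aᵀy* − c such that x* + v* > 0 and y* + u* > 0 componentwise. -/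
open Matrix

/-- **Farkas' lemma** for finitely many linear functionals: if `g` is nonpositive wherever all
`f i` are, then `g` is a nonnegative combination of the `f i`. -/
theorem exists_nonneg_combination_of_forall_nonpos {R V ι : Type*} [Field R] [LinearOrder R]
    [IsStrictOrderedRing R] [AddCommGroup V] [Module R V] (s : Finset ι) (f : ι → V →ₗ[R] R)
    (g : V →ₗ[R] R) (h : ∀ v, (∀ i ∈ s, f i v ≤ 0) → g v ≤ 0) :
    ∃ a : ι → R, (∀ i, 0 ≤ a i) ∧ g = ∑ i ∈ s, a i • f i := by
  classical
  induction s using Finset.induction_on generalizing f g with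
  | empty =>
    refine ⟨0, fun _ => le_rfl, LinearMap.ext fun v => ?_⟩
    have h₁ := h v (by simp)
    have h₂ := h (-v) (by simp)
    rw [map_neg] at h₂
    simpa using le_antisymm h₁ (by linarith)
  | insert k s hk ih =>
    have sum_update (a : ι → R) (r : R) (f : ι → V →ₗ[R] R) :
        ∑ i ∈ insert k s, Function.update a k r i • f i = r • f k + ∑ i ∈ s, a i • f i := by
      rw [Finset.sum_insert hk, Function.update_self]
      congr 1
      refine Finset.sum_congr rfl fun i hi => ?_
      rw [Function.update_of_ne (by rintro rfl; exact hk hi)]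
    have update_nonneg {a : ι → R} (ha : ∀ i, 0 ≤ a i) {r : R} (hr : 0 ≤ r) (i : ι) :
        0 ≤ Function.update a k r i := by
      rcases eq_or_ne i k with rfl | hi
      · simpa using hr
      · simpa [hi] using ha i
    by_cases hs : ∀ v, (∀ i ∈ s, f i v ≤ 0) → g v ≤ 0
    · obtain ⟨a, ha, rfl⟩ := ih f g hs
      exact ⟨Function.update a k 0, update_nonneg ha le_rfl, by simp [sum_update]⟩
    push Not at hs
    obtain ⟨w, hw, hgw⟩ := hs
    have hkw : 0 < f k w := by
      by_contra! hle
      exact hgw.not_ge (h w (by simpa [hle] using hw))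
    -- Project along `w` onto the kernel of `f k`.
    have key (φ : V →ₗ[R] R) (v : V) :
        (φ - (φ w / f k w) • f k) v = φ (v - (f k v / f k w) • w) := by
      simp only [LinearMap.sub_apply, LinearMap.smul_apply, map_sub, map_smul, smul_eq_mul]
      ring
    obtain ⟨a, ha, hga⟩ := ih (fun i => f i - (f i w / f k w) • f k) (g - (g w / f k w) • f k) <| by
      intro v hv
      rw [key]
      refine h _ fun i hi => ?_
      rcases Finset.mem_insert.1 hi with rfl | hi
      · simp [hkw.ne']
      · rw [← key]
        exact hv i hi
    refine ⟨Function.update a k (g w / f k w - ∑ i ∈ s, a i * (f i w / f k w)),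
      update_nonneg ha ?_, ?_⟩
    · have : ∑ i ∈ s, a i * (f i w / f k w) ≤ 0 := Finset.sum_nonpos fun i hi =>
        mul_nonpos_of_nonneg_of_nonpos (ha i) (div_nonpos_of_nonpos_of_nonneg (hw i hi) hkw.le)
      have := div_nonneg hgw.le hkw.le
      linarith
    · ext v
      have := LinearMap.congr_fun hga v
      simp only [LinearMap.sub_apply, LinearMap.smul_apply, LinearMap.sum_apply, smul_eq_mul,
        mul_sub, Finset.sum_sub_distrib, ← mul_assoc] at this
      simp only [sum_update, LinearMap.add_apply, LinearMap.smul_apply, LinearMap.sum_apply,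
        smul_eq_mul, sub_mul, Finset.sum_mul]
      linarith

/-- **Tucker's theorem** on skew-symmetric matrices. -/
theorem exists_nonneg_add_mulVec_pos_of_transpose_eq_neg {R ι : Type*} [Field R] [LinearOrder R]
    [IsStrictOrderedRing R] [Fintype ι] (K : Matrix ι ι R) (hK : Kᵀ = -K) :
    ∃ z : ι → R, (∀ i, 0 ≤ z i) ∧ (∀ i, 0 ≤ (K *ᵥ z) i) ∧ ∀ i, 0 < z i + (K *ᵥ z) i := by
  classical
  have single (i : ι) : ∃ z : ι → R, (∀ j, 0 ≤ z j) ∧ (∀ j, 0 ≤ (K *ᵥ z) j) ∧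
      0 < z i + (K *ᵥ z) i := by
    by_cases h : ∃ z : ι → R, (∀ j, 0 ≤ z j) ∧ (∀ j, 0 ≤ (K *ᵥ z) j) ∧ 0 < z i
    · obtain ⟨z, hz, hKz, hi⟩ := h
      exact ⟨z, hz, hKz, add_pos_of_pos_of_nonneg hi (hKz i)⟩
    push Not at h
    obtain ⟨a, ha, hga⟩ := exists_nonneg_combination_of_forall_nonpos Finset.univ
      (Sum.elim (fun j => -LinearMap.proj j) fun j => -(LinearMap.proj j ∘ₗ K.mulVecLin))
      (LinearMap.proj i) <| by
        intro z hz
        exact h z (fun j => by simpa using hz (Sum.inl j) (Finset.mem_univ _))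
          fun j => by simpa using hz (Sum.inr j) (Finset.mem_univ _)
    have hKa (j : ι) : (K *ᵥ fun k => a (Sum.inr k)) j =
        (Pi.single j 1 : ι → R) i + a (Sum.inl j) := by
      have hskew (k : ι) : K k j = -K j k := congrFun (congrFun hK j) k
      have := congrArg (fun φ => φ (Pi.single j 1)) hga
      simp [Fintype.sum_sum_type, LinearMap.sum_apply, Pi.single_apply, hskew] at this
      simp only [mulVec, dotProduct, Pi.single_apply, mul_comm (K j _)]
      linarith
    refine ⟨fun k => a (Sum.inr k), fun _ => ha _, fun j => ?_, ?_⟩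
    · rw [hKa]
      refine add_nonneg ?_ (ha _)
      rw [Pi.single_apply]
      split_ifs <;> simp
    · rw [hKa, Pi.single_eq_same]
      linarith [ha (Sum.inl i), ha (Sum.inr i)]
  choose z hz hKz hpos using single
  have hsum (j : ι) : (K *ᵥ ∑ i, z i) j = ∑ i, (K *ᵥ z i) j := by
    rw [mulVec_sum, Finset.sum_apply]
  refine ⟨∑ i, z i, fun j => ?_, fun j => ?_, fun j => ?_⟩
  · rw [Finset.sum_apply]
    exact Finset.sum_nonneg fun i _ => hz i j
  · rw [hsum]
    exact Finset.sum_nonneg fun i _ => hKz i j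
  · rw [hsum, Finset.sum_apply, ← Finset.sum_add_distrib]
    exact Finset.sum_pos' (fun i _ => add_nonneg (hz i j) (hKz i j)) ⟨j, Finset.mem_univ j, hpos j⟩

/-- Weak duality for linear programs in canonical form. -/
theorem dotProduct_le_dotProduct_of_mulVec_le {R m n : Type*} [CommRing R] [PartialOrder R]
    [IsOrderedRing R] [Fintype m] [Fintype n] {A : Matrix m n R} {b : m → R} {c x : n → R}
    {y : m → R} (hx : ∀ i, (A *ᵥ x) i ≤ b i) (hx₀ : ∀ j, 0 ≤ x j)
    (hy : ∀ j, c j ≤ (Aᵀ *ᵥ y) j) (hy₀ : ∀ i, 0 ≤ y i) : c ⬝ᵥ x ≤ b ⬝ᵥ y :=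
  calc
    c ⬝ᵥ x ≤ (Aᵀ *ᵥ y) ⬝ᵥ x := dotProduct_le_dotProduct_of_nonneg_right hy hx₀
    _ = (A *ᵥ x) ⬝ᵥ y := by
      rw [mulVec_transpose, ← dotProduct_mulVec, dotProduct_comm]
    _ ≤ b ⬝ᵥ y := dotProduct_le_dotProduct_of_nonneg_right hx hy₀

/-- The homogeneous self-dual system of a linear program has a strictly complementary solution. -/
theorem exists_homogeneous_strict_complementary {R m n : Type*} [Field R] [LinearOrder R]
    [IsStrictOrderedRing R] [Fintype m] [Fintype n] (A : Matrix m n R) (b : m → R) (c : n → R) :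
    ∃ (x : n → R) (y : m → R) (t : R), (∀ j, 0 ≤ x j) ∧ (∀ i, 0 ≤ y i) ∧ 0 ≤ t ∧
      (∀ i, (A *ᵥ x) i ≤ t * b i) ∧ (∀ j, t * c j ≤ (Aᵀ *ᵥ y) j) ∧ b ⬝ᵥ y ≤ c ⬝ᵥ x ∧
      (∀ i, 0 < y i + (t * b i - (A *ᵥ x) i)) ∧ (∀ j, 0 < x j + ((Aᵀ *ᵥ y) j - t * c j)) ∧
      0 < t + (c ⬝ᵥ x - b ⬝ᵥ y) := by
  let d : m ⊕ n → R := Sum.elim b (-c)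
  obtain ⟨z, hz, hKz, hpos⟩ := exists_nonneg_add_mulVec_pos_of_transpose_eq_neg
    (fromBlocks (fromBlocks 0 (-A) Aᵀ 0) (replicateCol Unit d) (-replicateRow Unit d) 0)
    (by simp [fromBlocks_transpose, fromBlocks_neg])
  obtain ⟨w, t, rfl⟩ : ∃ w t, z = Sum.elim w fun _ => t :=
    ⟨z ∘ Sum.inl, z (Sum.inr ()), by ext (_ | _) <;> rfl⟩
  obtain ⟨y, x, rfl⟩ : ∃ y x, w = Sum.elim y x := ⟨w ∘ Sum.inl, w ∘ Sum.inr, by simp⟩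
  have col (i : m ⊕ n) : (replicateCol Unit d *ᵥ fun _ => t) i = t * d i := by
    simp [mulVec, dotProduct, mul_comm]
  have row (u : Unit) : (replicateRow Unit d *ᵥ Sum.elim y x) u = b ⬝ᵥ y - c ⬝ᵥ x := by
    simp [mulVec, replicateRow_apply, dotProduct, d, sub_eq_add_neg]
  simp only [Sum.forall, fromBlocks_mulVec, Sum.elim_comp_inl, Sum.elim_comp_inr, Sum.elim_inl,
    Sum.elim_inr, Pi.add_apply, Pi.neg_apply, col, row, zero_mulVec, Pi.zero_apply, neg_mulVec, d]
    at hz hKz hpos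
  refine ⟨x, y, t, hz.1.2, hz.1.1, hz.2 (), fun i => ?_, fun j => ?_, ?_, fun i => ?_,
    fun j => ?_, ?_⟩
  · linarith [hKz.1.1 i]
  · linarith [hKz.1.2 j]
  · linarith [hKz.2 ()]
  · linarith [hpos.1.1 i]
  · linarith [hpos.1.2 j]
  · linarith [hpos.2 ()]

/-- Goldman–Tucker theorem: if the primal `max {cᵀx : Ax ≤ b, x ≥ 0}` and the dual
`min {bᵀy : Aᵀy ≥ c, y ≥ 0}` both have optimal solutions, then there exist optimal
solutions `x*, y*` whose slacks `u* = b − Ax*`, `v* = Aᵀy* − c` satisfy `x* + v* > 0`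
and `y* + u* > 0` componentwise. -/
theorem goldman_tucker (m n : ℕ)
    (A : Matrix (Fin m) (Fin n) ℝ) (b : Fin m → ℝ) (c : Fin n → ℝ)
    (hP : ∃ x : Fin n → ℝ,
      ((∀ i, A.mulVec x i ≤ b i) ∧ (∀ j, 0 ≤ x j)) ∧
        ∀ x' : Fin n → ℝ, (∀ i, A.mulVec x' i ≤ b i) → (∀ j, 0 ≤ x' j) →
          c ⬝ᵥ x' ≤ c ⬝ᵥ x)
    (hD : ∃ y : Fin m → ℝ,
      ((∀ j, c j ≤ Aᵀ.mulVec y j) ∧ (∀ i, 0 ≤ y i)) ∧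
        ∀ y' : Fin m → ℝ, (∀ j, c j ≤ Aᵀ.mulVec y' j) → (∀ i, 0 ≤ y' i) →
          b ⬝ᵥ y ≤ b ⬝ᵥ y') :
    ∃ xs : Fin n → ℝ, ∃ ys : Fin m → ℝ,
      ((∀ i, A.mulVec xs i ≤ b i) ∧ (∀ j, 0 ≤ xs j) ∧
        ∀ x' : Fin n → ℝ, (∀ i, A.mulVec x' i ≤ b i) → (∀ j, 0 ≤ x' j) →
          c ⬝ᵥ x' ≤ c ⬝ᵥ xs) ∧
      ((∀ j, c j ≤ Aᵀ.mulVec ys j) ∧ (∀ i, 0 ≤ ys i) ∧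
        ∀ y' : Fin m → ℝ, (∀ j, c j ≤ Aᵀ.mulVec y' j) → (∀ i, 0 ≤ y' i) →
          b ⬝ᵥ ys ≤ b ⬝ᵥ y') ∧
      (∀ j, 0 < xs j + (Aᵀ.mulVec ys - c) j) ∧
      (∀ i, 0 < ys i + (b - A.mulVec xs) i) := by
  obtain ⟨x₀, ⟨hx₀, hx₀'⟩, -⟩ := hP
  obtain ⟨y₀, ⟨hy₀, hy₀'⟩, -⟩ := hD
  obtain ⟨x, y, t, hx, hy, ht, hAx, hAy, hgap, hposy, hposx, hpost⟩ :=
    exists_homogeneous_strict_complementary A b c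
  have ht : 0 < t := by
    refine ht.lt_of_ne fun h => ?_
    subst h
    simp only [zero_mul, zero_add] at hAx hAy hpost
    have h₁ : c ⬝ᵥ x ≤ (0 : Fin m → ℝ) ⬝ᵥ y₀ :=
      dotProduct_le_dotProduct_of_mulVec_le hAx hx hy₀ hy₀'
    have h₂ : (0 : Fin n → ℝ) ⬝ᵥ x₀ ≤ b ⬝ᵥ y :=
      dotProduct_le_dotProduct_of_mulVec_le hx₀ hx₀' hAy hy
    rw [zero_dotProduct] at h₁ h₂
    linarith
  have hxs (i) : (A *ᵥ (t⁻¹ • x)) i ≤ b i := by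
    rw [mulVec_smul, Pi.smul_apply, smul_eq_mul, inv_mul_le_iff₀ ht]
    exact hAx i
  have hys (j) : c j ≤ (Aᵀ *ᵥ (t⁻¹ • y)) j := by
    rw [mulVec_smul, Pi.smul_apply, smul_eq_mul, le_inv_mul_iff₀ ht]
    exact hAy j
  have hxs' (j) : 0 ≤ (t⁻¹ • x) j := mul_nonneg (inv_nonneg.2 ht.le) (hx j)
  have hys' (i) : 0 ≤ (t⁻¹ • y) i := mul_nonneg (inv_nonneg.2 ht.le) (hy i)
  have hopt : b ⬝ᵥ (t⁻¹ • y) ≤ c ⬝ᵥ (t⁻¹ • x) := by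
    rw [dotProduct_smul, dotProduct_smul]
    exact smul_le_smul_of_nonneg_left hgap (inv_nonneg.2 ht.le)
  refine ⟨t⁻¹ • x, t⁻¹ • y, ⟨hxs, hxs', fun x' h h' => ?_⟩, ⟨hys, hys', fun y' h h' => ?_⟩,
    fun j => ?_, fun i => ?_⟩
  · exact (dotProduct_le_dotProduct_of_mulVec_le h h' hys hys').trans hopt
  · exact hopt.trans (dotProduct_le_dotProduct_of_mulVec_le hxs hxs' h h')
  · have := mul_pos (inv_pos.2 ht) (hposx j)
    simp only [mulVec_smul, Pi.smul_apply, Pi.sub_apply, smul_eq_mul]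
    field_simp at this ⊢
    linarith
  · have := mul_pos (inv_pos.2 ht) (hposy i)
    simp only [mulVec_smul, Pi.smul_apply, Pi.sub_apply, smul_eq_mul]
    field_simp at this ⊢
    linarith
end
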